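/- For α > 0, suppose a : [0,T) → [0,∞) is nondecreasing and locally integrable, b : [0,T) → [0,∞) is nondecreasing continuous with b(t) ≤ M for a constant M, and x : [0,T) → [0,∞) is locally integrable with x(t) ≤ a(t) + b(t) ∫₀ᵗ (t−s)^{α−1} x(s) ds for all t ∈ [0,T). Then x(t) ≤ a(t)·E_α(b(t)·Γ(α)·t^α) for all t ∈ [0,T). -/

import Mathlib

open MeasureTheory

/-- The one-parameter Mittag-Leffler function E_α(z) = Σ_{k≥0} z^k/Γ(αk+1). -/
noncomputable def mittagLeffler (α z : ℝ) : ℝ :=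
  ∑' k : ℕ, z ^ k / Real.Gamma (α * k + 1)

open scoped ENNReal

/-- The Riemann–Liouville kernel. -/
noncomputable def rlK (β : ℝ) : ℝ → ℝ≥0∞ :=
  Set.indicator (Set.Ioi 0) (fun u => ENNReal.ofReal (u ^ (β - 1) / Real.Gamma β))

lemma rlK_meas (β : ℝ) : Measurable (rlK β) := by
  unfold rlK
  exact Measurable.indicator (by fun_prop) measurableSet_Ioi

lemma rlK_pos {β u : ℝ} (hu : 0 < u) :
    rlK β u = ENNReal.ofReal (u ^ (β - 1) / Real.Gamma β) :=
  Set.indicator_of_mem (Set.mem_Ioi.2 hu) _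

lemma rlK_nonpos {β u : ℝ} (hu : u ≤ 0) : rlK β u = 0 :=
  Set.indicator_of_notMem (by simpa using hu) _

lemma lintegral_scale (f : ℝ → ℝ≥0∞) (hf : Measurable f) {w : ℝ} (hw : 0 < w) :
    ∫⁻ y, f y = ENNReal.ofReal w * ∫⁻ y, f (w * y) := by
  conv_lhs => rw [← Real.smul_map_volume_mul_left hw.ne']
  rw [lintegral_smul_measure, lintegral_map hf (by fun_prop), abs_of_pos hw, smul_eq_mul]

lemma rlK_conv {α β : ℝ} (hα : 0 < α) (hβ : 0 < β) :
    lconvolution (rlK α) (rlK β) volume = rlK (α + β) := by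
  ext w
  rw [lconvolution_def]
  rcases le_or_gt w 0 with hw | hw
  · rw [rlK_nonpos hw]
    refine (lintegral_congr fun y => ?_).trans lintegral_zero
    rcases le_or_gt y 0 with hy | hy
    · simp [rlK_nonpos hy]
    · simp [rlK_nonpos (show -y + w ≤ 0 by linarith)]
  · have hm : Measurable fun y => rlK α y * rlK β (-y + w) :=
      (rlK_meas α).mul ((rlK_meas β).comp (by fun_prop))
    rw [lintegral_scale _ hm hw, rlK_pos hw]
    have key : ∀ y, rlK α (w * y) * rlK β (-(w * y) + w) =
        ENNReal.ofReal (w ^ (α + β - 1) / w / Real.Gamma (α + β)) *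
          ProbabilityTheory.betaPDF α β y := by
      intro y
      rcases le_or_gt y 0 with hy | hy
      · rw [ProbabilityTheory.betaPDF_eq_zero_of_nonpos hy, rlK_nonpos (by nlinarith)]; simp
      rcases le_or_gt 1 y with hy1 | hy1
      · rw [ProbabilityTheory.betaPDF_eq_zero_of_one_le hy1,
          rlK_nonpos (u := -(w * y) + w) (by nlinarith)]; simp
      have e : -(w * y) + w = w * (1 - y) := by ring
      have h1 : 0 < 1 - y := by linarith
      have := Real.Gamma_pos_of_pos hα
      have := Real.Gamma_pos_of_pos hβ
      have := Real.Gamma_pos_of_pos (add_pos hα hβ)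
      rw [ProbabilityTheory.betaPDF_of_pos_lt_one hy hy1, e, rlK_pos (by positivity),
        rlK_pos (by positivity), ← ENNReal.ofReal_mul (by positivity),
        ← ENNReal.ofReal_mul (by positivity)]
      congr 1
      rw [Real.mul_rpow hw.le hy.le, Real.mul_rpow hw.le h1.le, ProbabilityTheory.beta,
        show α + β - 1 = (α - 1) + (β - 1) + 1 by ring, Real.rpow_add hw, Real.rpow_add hw,
        Real.rpow_one]
      field_simp
    simp_rw [key]
    rw [lintegral_const_mul _ (by
      unfold ProbabilityTheory.betaPDF
      exact (ProbabilityTheory.measurable_betaPDFReal α β).ennreal_ofReal),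
      ProbabilityTheory.lintegral_betaPDF_eq_one hα hβ, mul_one, ← ENNReal.ofReal_mul hw.le]
    congr 1
    field_simp

lemma iter_bound {α : ℝ} (hα : 0 < α) (A l : ℝ≥0∞) (g : ℝ → ℝ≥0∞) (hg : AEMeasurable g)
    (h : ∀ s, g s ≤ A * rlK 1 s + l * lconvolution (rlK α) g volume s) (n : ℕ) (s : ℝ) :
    g s ≤ A * ∑ j ∈ Finset.range (n + 1), l ^ j * rlK (α * j + 1) s +
      l ^ (n + 1) * lconvolution (rlK (α * (n + 1 : ℕ))) g volume s := by
  induction n with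
  | zero => simpa using h s
  | succ n ih =>
    refine ih.trans ?_
    have hn : 0 < α * (n + 1 : ℕ) := by positivity
    have step : lconvolution (rlK (α * (n + 1 : ℕ))) g volume s ≤
        A * rlK (α * (n + 1 : ℕ) + 1) s +
          l * lconvolution (rlK (α * (n + 1 + 1 : ℕ))) g volume s := by
      have e : α * (n + 1 + 1 : ℕ) = α * (n + 1 : ℕ) + α := by push_cast; ring
      have hc : AEMeasurable (lconvolution (rlK α) g volume) :=
        aemeasurable_lconvolution (rlK_meas α).aemeasurable hg
      rw [e, ← rlK_conv hn hα, ← rlK_conv hn one_pos,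
        ← lconvolution_assoc₀ (rlK_meas _).aemeasurable (rlK_meas _).aemeasurable hg]
      have q : Measure.QuasiMeasurePreserving (fun y : ℝ => -y + s) volume volume := by
        have := (measurePreserving_add_right (volume : Measure ℝ) s).comp
          (Measure.measurePreserving_neg (volume : Measure ℝ))
        exact this.quasiMeasurePreserving
      have hc' := hc.comp_quasiMeasurePreserving q
      simp only [lconvolution_def (f := rlK (α * (n + 1 : ℕ)))]
      have m1 : AEMeasurable fun y => rlK (α * (n + 1 : ℕ)) y * rlK 1 (-y + s) :=
        ((rlK_meas _).mul ((rlK_meas 1).comp (by fun_prop))).aemeasurable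
      have m2 : AEMeasurable fun y => rlK (α * (n + 1 : ℕ)) y *
          lconvolution (rlK α) g volume (-y + s) := (rlK_meas _).aemeasurable.mul hc'
      rw [← lintegral_const_mul'' _ m1, ← lintegral_const_mul'' _ m2,
        ← lintegral_add_left' (m1.const_mul _)]
      refine lintegral_mono fun y => ?_
      refine (mul_le_mul_right (h (-y + s)) _).trans (le_of_eq ?_)
      ring
    rw [Finset.sum_range_succ _ (n + 1)]
    refine (add_le_add_right (mul_le_mul_right step _) _).trans (le_of_eq ?_)
    push_cast
    ring

lemma Gamma_lower {x R : ℝ} (hx : 1 ≤ x) (hR : 0 < R) :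
    R ^ (x - 1) * Real.exp (-R) ≤ Real.Gamma x := by
  have hi := Real.GammaIntegral_convergent (show 0 < x by linarith)
  rw [Real.Gamma_eq_integral (by linarith), ← integral_exp_neg_Ioi, ← integral_const_mul]
  have hsub : Set.Ioi R ⊆ Set.Ioi (0:ℝ) := Set.Ioi_subset_Ioi hR.le
  calc ∫ y in Set.Ioi R, R ^ (x - 1) * Real.exp (-y)
      ≤ ∫ y in Set.Ioi R, Real.exp (-y) * y ^ (x - 1) := by
        refine setIntegral_mono_on ((integrableOn_exp_neg_Ioi R).const_mul _)
          (hi.mono_set hsub) measurableSet_Ioi fun y hy => ?_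
        rw [mul_comm]
        have : R ^ (x - 1) ≤ y ^ (x - 1) :=
          Real.rpow_le_rpow hR.le (le_of_lt hy) (by linarith)
        gcongr
    _ ≤ _ := by
        refine setIntegral_mono_set hi ?_ hsub.eventuallyLE
        refine (ae_restrict_iff' measurableSet_Ioi).2 (Filter.Eventually.of_forall fun y hy => ?_)
        have : (0:ℝ) < y := hy
        simp only [Pi.zero_apply]; positivity

/-- choose `R` with `R ^ α = 2 z + 1`. -/
lemma exists_R {α z : ℝ} (hα : 0 < α) (hz : 0 ≤ z) :
    ∃ R : ℝ, 0 < R ∧ R ^ α = 2 * z + 1 := by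
  refine ⟨(2 * z + 1) ^ (1 / α), by positivity, ?_⟩
  rw [← Real.rpow_mul (by positivity), one_div, inv_mul_cancel₀ hα.ne', Real.rpow_one]

lemma ratio_pow {z : ℝ} (hz : 0 ≤ z) (k : ℕ) : z ^ k / (2 * z + 1) ^ k ≤ (1 / 2) ^ k := by
  rw [← div_pow]
  refine pow_le_pow_left₀ (by positivity) ?_ k
  rw [div_le_div_iff₀ (by positivity) (by norm_num)]
  linarith

lemma ml_summable {α z : ℝ} (hα : 0 < α) (hz : 0 ≤ z) :
    Summable fun k : ℕ => z ^ k / Real.Gamma (α * k + 1) := by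
  obtain ⟨R, hR, hRe⟩ := exists_R hα hz
  refine Summable.of_nonneg_of_le (f := fun k : ℕ => Real.exp R * (1 / 2) ^ k) (fun k => ?_)
    (fun k => ?_) ((summable_geometric_of_lt_one (by norm_num) (by norm_num)).mul_left _)
  · have := Real.Gamma_pos_of_pos (show 0 < α * k + 1 by positivity)
    positivity
  · have h := Gamma_lower (x := α * k + 1) (by simp; positivity) hR
    rw [add_sub_cancel_right, Real.rpow_mul hR.le, hRe, Real.rpow_natCast] at h
    calc _ ≤ z ^ k / ((2 * z + 1) ^ k * Real.exp (-R)) := by gcongr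
      _ = Real.exp R * (z ^ k / (2 * z + 1) ^ k) := by rw [Real.exp_neg]; field_simp
      _ ≤ _ := by gcongr; exact ratio_pow hz k

lemma rem_bound {α l t : ℝ} (hα : 0 < α) (hl : 0 ≤ l) (ht : 0 < t) :
    ∃ C : ℝ, 0 ≤ C ∧ ∀ n : ℕ, 1 ≤ α * n → ∀ u, 0 < u → u ≤ t →
      l ^ n * (u ^ (α * n - 1) / Real.Gamma (α * n)) ≤ C * (1 / 2) ^ n := by
  have hz : 0 ≤ l * t ^ α := by positivity
  obtain ⟨R, hR, hRe⟩ := exists_R hα hz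
  refine ⟨Real.exp R * R / t, by positivity, fun n hn u hu hut => ?_⟩
  have h := Gamma_lower hn hR
  rw [Real.rpow_sub_one hR.ne', Real.rpow_mul hR.le, hRe, Real.rpow_natCast] at h
  have h2 : u ^ (α * n - 1) ≤ (t ^ α) ^ n / t := by
    rw [← Real.rpow_natCast, ← Real.rpow_mul ht.le, ← Real.rpow_sub_one ht.ne']
    exact Real.rpow_le_rpow hu.le hut (by linarith)
  calc _ ≤ l ^ n * (((t ^ α) ^ n / t) / ((2 * (l * t ^ α) + 1) ^ n / R * Real.exp (-R))) := by
        gcongr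
    _ = Real.exp R * R / t * ((l * t ^ α) ^ n / (2 * (l * t ^ α) + 1) ^ n) := by
        rw [Real.exp_neg, mul_pow l]; field_simp
    _ ≤ _ := by gcongr; exact ratio_pow hz n

lemma rem_tendsto {α l t : ℝ} (hα : 0 < α) (hl : 0 ≤ l) (ht : 0 < t) (g : ℝ → ℝ≥0∞)
    (hg : AEMeasurable g) (hg0 : ∀ s ≤ 0, g s = 0) (hgi : ∫⁻ y, g y ≠ ∞) :
    Filter.Tendsto (fun n : ℕ => ENNReal.ofReal l ^ (n + 1) *
      lconvolution (rlK (α * (n + 1 : ℕ))) g volume t) Filter.atTop (nhds 0) := by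
  obtain ⟨C, hC, hb⟩ := rem_bound hα hl ht
  have hlim : Filter.Tendsto (fun n : ℕ => ENNReal.ofReal (C * (1 / 2) ^ (n + 1)) * ∫⁻ y, g y)
      Filter.atTop (nhds 0) := by
    have h1 : Filter.Tendsto (fun n : ℕ => C * (1 / 2 : ℝ) ^ (n + 1)) Filter.atTop (nhds 0) := by
      have := ((tendsto_pow_atTop_nhds_zero_of_lt_one (r := (1 / 2 : ℝ)) (by norm_num)
        (by norm_num)).comp (Filter.tendsto_add_atTop_nat 1)).const_mul C
      simpa using this
    have h2 := ENNReal.tendsto_ofReal h1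
    have h3 := ENNReal.Tendsto.mul_const h2 (Or.inr hgi)
    simpa using h3
  refine tendsto_of_tendsto_of_tendsto_of_le_of_le' tendsto_const_nhds hlim
    (Filter.Eventually.of_forall fun n => zero_le) ?_
  obtain ⟨N, hN⟩ := exists_nat_ge (1 / α)
  filter_upwards [Filter.eventually_ge_atTop N] with n hn
  have hn1 : 1 ≤ α * (n + 1 : ℕ) := by
    rw [div_le_iff₀ hα] at hN
    have : (N : ℝ) ≤ n := by exact_mod_cast hn
    push_cast
    nlinarith
  have hGi : 0 < Real.Gamma (α * (n + 1 : ℕ)) := Real.Gamma_pos_of_pos (by linarith)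
  have hinv : ∫⁻ y, g (-y + t) = ∫⁻ y, g y := by
    rw [← lintegral_add_right_eq_self g t, ← lintegral_neg_eq_self (fun y => g (y + t))]
  have q : Measure.QuasiMeasurePreserving (fun y : ℝ => -y + t) volume volume := by
    have := (measurePreserving_add_right (volume : Measure ℝ) t).comp
      (Measure.measurePreserving_neg (volume : Measure ℝ))
    exact this.quasiMeasurePreserving
  have hgq : AEMeasurable fun y => g (-y + t) := hg.comp_quasiMeasurePreserving q
  have hm : AEMeasurable fun y => rlK (α * (n + 1 : ℕ)) y * g (-y + t) :=
    (rlK_meas _).aemeasurable.mul hgq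
  rw [lconvolution_def, ← hinv, ← lintegral_const_mul'' _ hm, ← lintegral_const_mul'' _ hgq]
  refine lintegral_mono fun y => ?_
  dsimp only
  rcases le_or_gt y 0 with hy | hy
  · simp [rlK_nonpos hy]
  rcases le_or_gt t y with hyt | hyt
  · simp [hg0 (-y + t) (by linarith)]
  rw [← mul_assoc, rlK_pos hy, ← ENNReal.ofReal_pow hl, ← ENNReal.ofReal_mul (by positivity)]
  have hfin := hb (n + 1) hn1 y hy hyt.le
  exact mul_le_mul_left (ENNReal.ofReal_le_ofReal hfin) _

theorem stmt_7 (α T M : ℝ) (hα : 0 < α) (hT : 0 < T)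
    (a b x : ℝ → ℝ)
    (ha0 : ∀ t ∈ Set.Ico (0:ℝ) T, 0 ≤ a t)
    (haMono : MonotoneOn a (Set.Ico 0 T))
    (haInt : ∀ t ∈ Set.Ico (0:ℝ) T, IntegrableOn a (Set.Icc 0 t))
    (hb0 : ∀ t ∈ Set.Ico (0:ℝ) T, 0 ≤ b t)
    (hbMono : MonotoneOn b (Set.Ico 0 T))
    (hbCont : ContinuousOn b (Set.Ico 0 T))
    (hbM : ∀ t ∈ Set.Ico (0:ℝ) T, b t ≤ M)
    (hx0 : ∀ t ∈ Set.Ico (0:ℝ) T, 0 ≤ x t)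
    (hxInt : ∀ t ∈ Set.Ico (0:ℝ) T, IntegrableOn x (Set.Icc 0 t))
    (hineq : ∀ t ∈ Set.Ico (0:ℝ) T,
      x t ≤ a t + b t * ∫ s in (0:ℝ)..t, (t - s) ^ (α - 1) * x s) :
    ∀ t ∈ Set.Ico (0:ℝ) T,
      x t ≤ a t * mittagLeffler α (b t * Real.Gamma α * t ^ α) := by
  intro t ht
  have hG : 0 < Real.Gamma α := Real.Gamma_pos_of_pos hα
  rcases ht.1.eq_or_lt with h0 | htpos
  · subst h0
    have h := hineq 0 ht
    have hE : mittagLeffler α 0 = 1 := by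
      unfold mittagLeffler
      rw [tsum_eq_single 0 (fun k hk => by simp [hk])]
      simp
    rw [Real.zero_rpow hα.ne', mul_zero, hE]
    simpa using h
  set g : ℝ → ℝ≥0∞ := Set.indicator (Set.Ioc 0 t) (fun s => ENNReal.ofReal (x s)) with hgdef
  have hxi : IntegrableOn x (Set.Ioc 0 t) := (hxInt t ht).mono_set Set.Ioc_subset_Icc_self
  have hgm : AEMeasurable g := by
    rw [hgdef, aemeasurable_indicator_iff measurableSet_Ioc]
    exact hxi.aestronglyMeasurable.aemeasurable.ennreal_ofReal
  have hg0 : ∀ s ≤ 0, g s = 0 := fun s hs =>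
    Set.indicator_of_notMem (fun h => absurd h.1 (not_lt.2 hs)) _
  have hgi : ∫⁻ y, g y ≠ ∞ := by
    rw [hgdef, lintegral_indicator measurableSet_Ioc]
    exact ((lintegral_mono fun y => Real.ofReal_le_enorm (x y)).trans_lt hxi.2).ne
  set l : ℝ := b t * Real.Gamma α with hl
  have hbt := hb0 t ht
  have hat := ha0 t ht
  have hl0 : 0 ≤ l := by positivity
  have hgle : ∀ s, g s ≤ ENNReal.ofReal (a t) * rlK 1 s +
      ENNReal.ofReal l * lconvolution (rlK α) g volume s := by
    intro s
    by_cases hs : s ∈ Set.Ioc 0 t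
    swap
    · rw [hgdef, Set.indicator_of_notMem hs]; exact zero_le
    have hsT : s ∈ Set.Ico 0 T := ⟨hs.1.le, hs.2.trans_lt ht.2⟩
    rw [show g s = ENNReal.ofReal (x s) from Set.indicator_of_mem hs _, rlK_pos hs.1]
    have hI : ENNReal.ofReal (∫ r in (0:ℝ)..s, (s - r) ^ (α - 1) * x r) ≤
        ENNReal.ofReal (Real.Gamma α) * lconvolution (rlK α) g volume s := by
      rw [intervalIntegral.integral_of_le hs.1.le, integral_Ioc_eq_integral_Ioo]
      refine (Real.ofReal_le_enorm _).trans ((enorm_integral_le_lintegral_enorm _).trans ?_)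
      rw [lconvolution_comm, lconvolution_def,
        ← lintegral_const_mul' _ _ ENNReal.ofReal_ne_top]
      rw [← lintegral_indicator measurableSet_Ioo]
      refine lintegral_mono fun r => ?_
      by_cases hr : r ∈ Set.Ioo 0 s
      swap
      · rw [Set.indicator_of_notMem hr]; exact zero_le
      have hsr : 0 < -r + s := by linarith [hr.2]
      have hxr := hx0 r ⟨hr.1.le, hr.2.trans hsT.2⟩
      have hsr' : 0 < s - r := by linarith
      rw [Set.indicator_of_mem hr,
        show g r = ENNReal.ofReal (x r) from
          Set.indicator_of_mem (show r ∈ Set.Ioc 0 t from ⟨hr.1, hr.2.le.trans hs.2⟩) _, rlK_pos hsr,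
        Real.enorm_of_nonneg (by positivity), ← ENNReal.ofReal_mul hxr,
        ← ENNReal.ofReal_mul hG.le, show -r + s = s - r by ring]
      refine ENNReal.ofReal_le_ofReal (le_of_eq ?_)
      field_simp
    have hbs := hb0 s hsT
    calc ENNReal.ofReal (x s) ≤
        ENNReal.ofReal (a s + b s * ∫ r in (0:ℝ)..s, (s - r) ^ (α - 1) * x r) :=
          ENNReal.ofReal_le_ofReal (hineq s hsT)
      _ ≤ ENNReal.ofReal (a s) +
          ENNReal.ofReal (b s * ∫ r in (0:ℝ)..s, (s - r) ^ (α - 1) * x r) :=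
          ENNReal.ofReal_add_le
      _ = ENNReal.ofReal (a s) +
          ENNReal.ofReal (b s) * ENNReal.ofReal (∫ r in (0:ℝ)..s, (s - r) ^ (α - 1) * x r) := by
          rw [ENNReal.ofReal_mul hbs]
      _ ≤ ENNReal.ofReal (a t) + ENNReal.ofReal (b t) *
          (ENNReal.ofReal (Real.Gamma α) * lconvolution (rlK α) g volume s) := by
          gcongr
          · exact haMono hsT ht hs.2
          · exact hbMono hsT ht hs.2
      _ = _ := by
          rw [hl, ENNReal.ofReal_mul hbt, mul_assoc]
          simp
  have hit := fun n => iter_bound hα (ENNReal.ofReal (a t)) (ENNReal.ofReal l) g hgm hgle n t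
  have hz : 0 ≤ l * t ^ α := by positivity
  have hsum := ml_summable hα hz
  have hpart : ∀ n : ℕ, ENNReal.ofReal (a t) * ∑ j ∈ Finset.range (n + 1),
      ENNReal.ofReal l ^ j * rlK (α * j + 1) t ≤
      ENNReal.ofReal (a t * mittagLeffler α (l * t ^ α)) := by
    intro n
    have hterm : ∀ j : ℕ, ENNReal.ofReal l ^ j * rlK (α * j + 1) t =
        ENNReal.ofReal ((l * t ^ α) ^ j / Real.Gamma (α * j + 1)) := by
      intro j
      rw [rlK_pos htpos, ← ENNReal.ofReal_pow hl0, ← ENNReal.ofReal_mul (by positivity),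
        add_sub_cancel_right, Real.rpow_mul htpos.le, Real.rpow_natCast, mul_pow l (t ^ α) j,
        mul_div_assoc]
    have hnn : ∀ j : ℕ, 0 ≤ (l * t ^ α) ^ j / Real.Gamma (α * j + 1) := fun j => by
      have := Real.Gamma_pos_of_pos (show 0 < α * j + 1 by positivity)
      positivity
    simp_rw [hterm]
    rw [← ENNReal.ofReal_sum_of_nonneg (fun j _ => hnn j), ← ENNReal.ofReal_mul hat]
    refine ENNReal.ofReal_le_ofReal (mul_le_mul_of_nonneg_left ?_ hat)
    exact hsum.sum_le_tsum _ (fun j _ => hnn j)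
  have hE0 : 0 ≤ mittagLeffler α (l * t ^ α) := tsum_nonneg fun j => by
    have := Real.Gamma_pos_of_pos (show 0 < α * j + 1 by positivity)
    positivity
  have hlim := (rem_tendsto hα hl0 htpos g hgm hg0 hgi).const_add
    (ENNReal.ofReal (a t * mittagLeffler α (l * t ^ α)))
  rw [add_zero] at hlim
  have hfin : g t ≤ ENNReal.ofReal (a t * mittagLeffler α (l * t ^ α)) :=
    ge_of_tendsto' hlim fun n => (hit n).trans (add_le_add_left (hpart n) _)
  rw [show g t = ENNReal.ofReal (x t) from Set.indicator_of_mem (Set.right_mem_Ioc.2 htpos) _,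
    ENNReal.ofReal_le_ofReal_iff (by positivity)] at hfin
  exact hfin
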